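/- Let Ω ⊆ ℝ² be open and simply connected (as a topological subspace), let λ ∈ ℝ, let ψ : ℝ² → ℝ be smooth on Ω with Δ(Δψ) + λΔψ = 0 on Ω, and set u = (∂₂ψ, −∂₁ψ). Then there exists a function p : ℝ² → ℝ, smooth on Ω, such that Δu + λu = ∇p on Ω (componentwise) and Δp = 0 on Ω. -/

import Mathlib

/-!
On `Ω` the function `w = Δψ + λψ` is harmonic, because `Δw = Δ(Δψ) + λΔψ = 0`, and partial
derivatives of a smooth function commute, so `Δu + λu = (∂₂w, -∂₁w)`.  Hence `p` has to be a
harmonic conjugate of `w`.  The 1-form `∂₂w dx₁ - ∂₁w dx₂` is closed precisely because `Δw = 0`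
(`fderiv_conjForm_symm`), and a primitive `p` of it satisfies
`Δp = ∂₁∂₂w - ∂₂∂₁w = 0`.

What remains is that a closed 1-form on a simply connected open set is exact
(`exists_primitive`).  The Poincaré lemma on balls provides local primitives, any two of which
differ by a constant where both are defined.  They are glued by
`exists_glue_of_simplyConnected`: the germs of primitives form a covering space of the base
with fibre `ℝ` (discrete), constructed as a fibre bundle whose coordinate changes are translations
by those constants, and the identity map of a simply connected base lifts to this covering, that is,
the covering has a continuous section.
-/

open MeasureTheory

/-- First partial derivative (with respect to the first coordinate of `ℝ × ℝ`). -/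
noncomputable def pd1 (f : ℝ × ℝ → ℝ) : ℝ × ℝ → ℝ := fun x => fderiv ℝ f x (1, 0)

/-- Second partial derivative (with respect to the second coordinate of `ℝ × ℝ`). -/
noncomputable def pd2 (f : ℝ × ℝ → ℝ) : ℝ × ℝ → ℝ := fun x => fderiv ℝ f x (0, 1)

/-- The Laplacian on `ℝ × ℝ`. -/
noncomputable def lap (f : ℝ × ℝ → ℝ) : ℝ × ℝ → ℝ := fun x => pd1 (pd1 f) x + pd2 (pd2 f) x

open Set Filter Topology

/-! ### Gluing local primitives over a simply connected space -/

/-- The real numbers with the discrete topology: the fibre of the covering space of primitives. -/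
def DiscreteReal : Type := ℝ

instance : TopologicalSpace DiscreteReal := ⊥

instance : DiscreteTopology DiscreteReal := ⟨rfl⟩

/-- The covering space of local primitives.  Over `x` the point with coordinate `v : ℝ` in the
chart `i` stands for the germ at `x` of the function `f i + v`; the coordinate changes are chosen
so that this germ does not depend on the chart. -/
noncomputable def primitiveCore {X : Type*} [TopologicalSpace X] (U : X → Set X)
    (hU : ∀ i, IsOpen (U i)) (hmem : ∀ i, i ∈ U i) (f : X → X → ℝ)
    (hf : ∀ i j, ∃ c, ∀ x ∈ U i ∩ U j, f i x - f j x = c) :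
    FiberBundleCore X X DiscreteReal where
  baseSet := U
  isOpen_baseSet := hU
  indexAt := id
  mem_baseSet_at := hmem
  coordChange i j x v := show ℝ from (show ℝ from v) + (f i x - f j x)
  coordChange_self i x _ v := by
    change (show ℝ from v) + (f i x - f i x) = v
    rw [sub_self]
    exact add_zero (show ℝ from v)
  continuousOn_coordChange i j := by
    obtain ⟨c, hc⟩ := hf i j
    -- On the overlap the change of coordinates is translation by the constant `c`.
    have hcont : Continuous (fun q : X × DiscreteReal =>
        (show DiscreteReal from (show ℝ from (show ℝ from q.2) + c))) :=
      (continuous_of_discreteTopology (f := fun v : DiscreteReal =>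
        (show DiscreteReal from (show ℝ from (show ℝ from v) + c)))).comp continuous_snd
    refine hcont.continuousOn.congr ?_
    rintro ⟨x, v⟩ ⟨hx, -⟩
    change (show ℝ from v) + (f i x - f j x) = (show ℝ from v) + c
    rw [hc x hx]
  coordChange_comp i j k x _ v := by
    change ((show ℝ from v) + (f i x - f j x)) + (f j x - f k x)
      = (show ℝ from v) + (f i x - f k x)
    ring

/-- Functions `f i` on open sets `U i ∋ i` of a simply connected, locally path-connected space,
pairwise differing by constants on overlaps, come from one global function: near each point `i`
it agrees with `f i` up to an additive constant. -/
theorem exists_glue_of_simplyConnected {X : Type*} [TopologicalSpace X] [SimplyConnectedSpace X]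
    [LocallyPathConnectedSpace X] (U : X → Set X)
    (hU : ∀ i, IsOpen (U i)) (hmem : ∀ i, i ∈ U i) (f : X → X → ℝ)
    (hf : ∀ i j, ∃ c, ∀ x ∈ U i ∩ U j, f i x - f j x = c) :
    ∃ p : X → ℝ, ∀ i, ∃ c : ℝ, ∀ᶠ x in 𝓝 i, p x = f i x + c := by
  let Z := primitiveCore U hU hmem f hf
  have hcov : IsCoveringMap (Bundle.TotalSpace.proj : Bundle.TotalSpace DiscreteReal Z.Fiber → X) :=
    FiberBundle.isCoveringMap
  obtain ⟨x₀⟩ : Nonempty X := inferInstance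
  obtain ⟨s, ⟨-, hs⟩, -⟩ := hcov.existsUnique_continuousMap_lifts (ContinuousMap.id X) x₀
    ⟨x₀, (show ℝ from 0)⟩ rfl
  have hs1 : ∀ x, (s x).1 = x := fun x => congrFun hs x
  -- The value at `x` of the germ `s x`, read in the chart centred at `x`.
  refine ⟨fun x => f x x + (show ℝ from (s x).2), fun i => ?_⟩
  have hcont : ContinuousAt (fun x => ((Z.localTriv i) (s x)).2) i := by
    refine continuousAt_snd.comp (ContinuousAt.comp ?_ s.continuous.continuousAt)
    refine (Z.localTriv i).continuousOn.continuousAt ((Z.localTriv i).open_source.mem_nhds ?_)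
    rw [Z.mem_localTriv_source, hs1]
    exact hmem i
  refine ⟨(show ℝ from ((Z.localTriv i) (s i)).2), ?_⟩
  -- The coordinate in a fixed chart is continuous with discrete values, hence locally constant.
  have hev := hcont.eventually_mem ((isOpen_discrete {((Z.localTriv i) (s i)).2}).mem_nhds rfl)
  filter_upwards [hev] with x hx
  have hx' : ((Z.localTriv i) (s x)).2 = ((Z.localTriv i) (s i)).2 := hx
  rw [← hx']
  change f x x + (show ℝ from (s x).2)
    = f i x + ((show ℝ from (s x).2) + (f (s x).1 (s x).1 - f i (s x).1))
  rw [hs1]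
  ring

/-- A closed 1-form on a simply connected open set is exact. -/
theorem exists_primitive {E : Type*} [NormedAddCommGroup E] [NormedSpace ℝ E] {Ω : Set E}
    (hΩ : IsOpen Ω) (hsc : SimplyConnectedSpace Ω) {ω : E → E →L[ℝ] ℝ}
    (hω : DifferentiableOn ℝ ω Ω)
    (hsymm : ∀ a ∈ Ω, ∀ x y, fderiv ℝ ω a x y = fderiv ℝ ω a y x) :
    ∃ p : E → ℝ, ∀ a ∈ Ω, HasFDerivAt p (ω a) a := by
  have hball : ∀ i : Ω, ∃ r > 0, Metric.ball (i : E) r ⊆ Ω :=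
    fun i => Metric.isOpen_iff.mp hΩ i i.2
  choose r hr hsub using hball
  have hloc : ∀ i : Ω, ∃ f : E → ℝ, ∀ a ∈ Metric.ball (i : E) (r i), HasFDerivAt f (ω a) a :=
    fun i => (convex_ball _ _).exists_forall_hasFDerivAt_of_fderiv_symmetric Metric.isOpen_ball
      (hω.mono (hsub i)) fun a ha => hsymm a (hsub i ha)
  choose f hf using hloc
  have : LocallyPathConnectedSpace Ω := hΩ.locallyPathConnectedSpace
  obtain ⟨p, hp⟩ := exists_glue_of_simplyConnected
    (fun i : Ω => ((↑) : Ω → E) ⁻¹' Metric.ball (i : E) (r i))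
    (fun i => Metric.isOpen_ball.preimage continuous_subtype_val)
    (fun i => Metric.mem_ball_self (hr i)) (fun i x => f i x) (by
      intro i j
      -- The intersection of two balls is convex, and `f i - f j` has zero derivative on it.
      by_cases hne : (Metric.ball (i : E) (r i) ∩ Metric.ball (j : E) (r j)).Nonempty
      · obtain ⟨y, hy⟩ := hne
        refine ⟨f i y - f j y, fun x hx => ?_⟩
        have hd : ∀ z ∈ Metric.ball (i : E) (r i) ∩ Metric.ball (j : E) (r j),
            HasFDerivAt (fun z => f i z - f j z) (0 : E →L[ℝ] ℝ) z := fun z hz => by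
          simpa using (hf i z hz.1).fun_sub (hf j z hz.2)
        have hconv := (convex_ball (i : E) (r i)).inter (convex_ball (j : E) (r j))
        have hopen := (Metric.isOpen_ball (x := (i : E)) (ε := r i)).inter
          (Metric.isOpen_ball (x := (j : E)) (ε := r j))
        refine hconv.is_const_of_fderivWithin_eq_zero (𝕜 := ℝ) (f := fun z => f i z - f j z)
          (fun z hz => (hd z hz).differentiableAt.differentiableWithinAt) (fun z hz => ?_) hx hy
        rw [fderivWithin_of_isOpen hopen hz, (hd z hz).fderiv]
      · exact ⟨0, fun x hx => (hne ⟨x, hx⟩).elim⟩)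
  classical
  refine ⟨fun x => if h : x ∈ Ω then p ⟨x, h⟩ else 0, fun a ha => ?_⟩
  obtain ⟨c, hc⟩ := hp ⟨a, ha⟩
  refine ((hf ⟨a, ha⟩ a (Metric.mem_ball_self (hr ⟨a, ha⟩))).add_const c).congr_of_eventuallyEq ?_
  rw [nhds_subtype_eq_comap, eventually_comap] at hc
  filter_upwards [hc, hΩ.mem_nhds ha] with x hx hxΩ
  rw [dif_pos hxΩ]
  exact hx ⟨x, hxΩ⟩ rfl

/-! ### Calculus of the partial derivatives -/

section Calculus

variable {Ω : Set (ℝ × ℝ)} {f g : ℝ × ℝ → ℝ}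

theorem contDiffOn_fderiv_apply (hΩ : IsOpen Ω) (hf : ContDiffOn ℝ (⊤ : ℕ∞) f Ω) (v : ℝ × ℝ) :
    ContDiffOn ℝ (⊤ : ℕ∞) (fun x => fderiv ℝ f x v) Ω :=
  (hf.fderiv_of_isOpen hΩ (by simp)).clm_apply contDiffOn_const

theorem contDiffOn_pd1 (hΩ : IsOpen Ω) (hf : ContDiffOn ℝ (⊤ : ℕ∞) f Ω) :
    ContDiffOn ℝ (⊤ : ℕ∞) (pd1 f) Ω := contDiffOn_fderiv_apply hΩ hf _

theorem contDiffOn_pd2 (hΩ : IsOpen Ω) (hf : ContDiffOn ℝ (⊤ : ℕ∞) f Ω) :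
    ContDiffOn ℝ (⊤ : ℕ∞) (pd2 f) Ω := contDiffOn_fderiv_apply hΩ hf _

theorem contDiffOn_lap (hΩ : IsOpen Ω) (hf : ContDiffOn ℝ (⊤ : ℕ∞) f Ω) :
    ContDiffOn ℝ (⊤ : ℕ∞) (lap f) Ω :=
  (contDiffOn_pd1 hΩ (contDiffOn_pd1 hΩ hf)).add (contDiffOn_pd2 hΩ (contDiffOn_pd2 hΩ hf))

theorem differentiableAt_of_contDiffOn (hΩ : IsOpen Ω) (hf : ContDiffOn ℝ (⊤ : ℕ∞) f Ω)
    {x : ℝ × ℝ} (hx : x ∈ Ω) : DifferentiableAt ℝ f x :=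
  (hf.differentiableOn (by simp)).differentiableAt (hΩ.mem_nhds hx)

theorem pd1_congr (hΩ : IsOpen Ω) (h : EqOn f g Ω) : EqOn (pd1 f) (pd1 g) Ω := fun x hx => by
  simp only [pd1, (h.eventuallyEq_of_mem (hΩ.mem_nhds hx)).fderiv_eq]

theorem pd2_congr (hΩ : IsOpen Ω) (h : EqOn f g Ω) : EqOn (pd2 f) (pd2 g) Ω := fun x hx => by
  simp only [pd2, (h.eventuallyEq_of_mem (hΩ.mem_nhds hx)).fderiv_eq]

theorem fderiv_fderiv_apply (hΩ : IsOpen Ω) (hf : ContDiffOn ℝ (⊤ : ℕ∞) f Ω) {x : ℝ × ℝ}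
    (hx : x ∈ Ω) (v w : ℝ × ℝ) :
    fderiv ℝ (fun y => fderiv ℝ f y v) x w = fderiv ℝ (fderiv ℝ f) x w v := by
  have hd : DifferentiableAt ℝ (fderiv ℝ f) x :=
    ((hf.fderiv_of_isOpen (m := (⊤ : ℕ∞)) hΩ (by simp)).differentiableOn
      (by simp)).differentiableAt (hΩ.mem_nhds hx)
  rw [fderiv_clm_apply hd (differentiableAt_const v)]
  simp

theorem pd1_pd2_comm (hΩ : IsOpen Ω) (hf : ContDiffOn ℝ (⊤ : ℕ∞) f Ω) :
    EqOn (pd1 (pd2 f)) (pd2 (pd1 f)) Ω := fun x hx => by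
  have hsymm : IsSymmSndFDerivAt ℝ f x :=
    (hf.contDiffAt (hΩ.mem_nhds hx)).isSymmSndFDerivAt
      (by simpa using WithTop.coe_le_coe.mpr (le_top : (2 : ℕ∞) ≤ ⊤))
  change fderiv ℝ (fun y => fderiv ℝ f y (0, 1)) x (1, 0)
    = fderiv ℝ (fun y => fderiv ℝ f y (1, 0)) x (0, 1)
  rw [fderiv_fderiv_apply hΩ hf hx, fderiv_fderiv_apply hΩ hf hx]
  exact hsymm _ _

theorem pd1_add_mul (hΩ : IsOpen Ω) (hf : ContDiffOn ℝ (⊤ : ℕ∞) f Ω)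
    (hg : ContDiffOn ℝ (⊤ : ℕ∞) g Ω) (c : ℝ) :
    EqOn (pd1 fun x => f x + c * g x) (fun x => pd1 f x + c * pd1 g x) Ω := fun x hx => by
  have hf' := differentiableAt_of_contDiffOn hΩ hf hx
  have hg' := differentiableAt_of_contDiffOn hΩ hg hx
  simp only [pd1]
  rw [fderiv_fun_add hf' (hg'.const_mul c), fderiv_const_mul hg']
  simp

theorem pd2_add_mul (hΩ : IsOpen Ω) (hf : ContDiffOn ℝ (⊤ : ℕ∞) f Ω)
    (hg : ContDiffOn ℝ (⊤ : ℕ∞) g Ω) (c : ℝ) :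
    EqOn (pd2 fun x => f x + c * g x) (fun x => pd2 f x + c * pd2 g x) Ω := fun x hx => by
  have hf' := differentiableAt_of_contDiffOn hΩ hf hx
  have hg' := differentiableAt_of_contDiffOn hΩ hg hx
  simp only [pd2]
  rw [fderiv_fun_add hf' (hg'.const_mul c), fderiv_const_mul hg']
  simp

theorem pd1_neg (f : ℝ × ℝ → ℝ) : pd1 (fun x => -f x) = fun x => -pd1 f x := by
  ext x; simp [pd1, fderiv_fun_neg]

theorem pd2_neg (f : ℝ × ℝ → ℝ) : pd2 (fun x => -f x) = fun x => -pd2 f x := by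
  ext x; simp [pd2, fderiv_fun_neg]

theorem lap_neg (f : ℝ × ℝ → ℝ) (x : ℝ × ℝ) : lap (fun y => -f y) x = -lap f x := by
  simp only [lap, pd1_neg, pd2_neg]; ring

theorem lap_add_mul (hΩ : IsOpen Ω) (hf : ContDiffOn ℝ (⊤ : ℕ∞) f Ω)
    (hg : ContDiffOn ℝ (⊤ : ℕ∞) g Ω) (c : ℝ) :
    EqOn (lap fun x => f x + c * g x) (fun x => lap f x + c * lap g x) Ω := fun x hx => by
  simp only [lap]
  rw [pd1_congr hΩ (pd1_add_mul hΩ hf hg c) hx, pd2_congr hΩ (pd2_add_mul hΩ hf hg c) hx,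
    pd1_add_mul hΩ (contDiffOn_pd1 hΩ hf) (contDiffOn_pd1 hΩ hg) c hx,
    pd2_add_mul hΩ (contDiffOn_pd2 hΩ hf) (contDiffOn_pd2 hΩ hg) c hx]
  ring

theorem pd1_add (hΩ : IsOpen Ω) (hf : ContDiffOn ℝ (⊤ : ℕ∞) f Ω)
    (hg : ContDiffOn ℝ (⊤ : ℕ∞) g Ω) :
    EqOn (pd1 fun x => f x + g x) (fun x => pd1 f x + pd1 g x) Ω := by
  simpa using pd1_add_mul hΩ hf hg 1

theorem pd2_add (hΩ : IsOpen Ω) (hf : ContDiffOn ℝ (⊤ : ℕ∞) f Ω)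
    (hg : ContDiffOn ℝ (⊤ : ℕ∞) g Ω) :
    EqOn (pd2 fun x => f x + g x) (fun x => pd2 f x + pd2 g x) Ω := by
  simpa using pd2_add_mul hΩ hf hg 1

theorem lap_pd1 (hΩ : IsOpen Ω) (hf : ContDiffOn ℝ (⊤ : ℕ∞) f Ω) :
    EqOn (lap (pd1 f)) (pd1 (lap f)) Ω := fun x hx => by
  have h1 := contDiffOn_pd1 hΩ hf
  have h2 := contDiffOn_pd2 hΩ hf
  have hsum : pd1 (lap f) x = pd1 (pd1 (pd1 f)) x + pd1 (pd2 (pd2 f)) x :=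
    pd1_add hΩ (contDiffOn_pd1 hΩ h1) (contDiffOn_pd2 hΩ h2) hx
  rw [hsum, pd1_pd2_comm hΩ h2 hx, pd2_congr hΩ (pd1_pd2_comm hΩ hf) hx]
  rfl

theorem lap_pd2 (hΩ : IsOpen Ω) (hf : ContDiffOn ℝ (⊤ : ℕ∞) f Ω) :
    EqOn (lap (pd2 f)) (pd2 (lap f)) Ω := fun x hx => by
  have h1 := contDiffOn_pd1 hΩ hf
  have h2 := contDiffOn_pd2 hΩ hf
  have hsum : pd2 (lap f) x = pd2 (pd1 (pd1 f)) x + pd2 (pd2 (pd2 f)) x :=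
    pd2_add hΩ (contDiffOn_pd1 hΩ h1) (contDiffOn_pd2 hΩ h2) hx
  rw [hsum, ← pd1_pd2_comm hΩ h1 hx, ← pd1_congr hΩ (pd1_pd2_comm hΩ hf) hx]
  rfl

end Calculus

/-! ### Harmonic conjugates -/

/-- The 1-form `∂₂w dx₁ - ∂₁w dx₂`, whose primitives are the harmonic conjugates of `w`. -/
noncomputable def conjForm (w : ℝ × ℝ → ℝ) (x : ℝ × ℝ) : ℝ × ℝ →L[ℝ] ℝ :=
  pd2 w x • ContinuousLinearMap.fst ℝ ℝ ℝ - pd1 w x • ContinuousLinearMap.snd ℝ ℝ ℝ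

theorem contDiffOn_conjForm {Ω : Set (ℝ × ℝ)} {w : ℝ × ℝ → ℝ} (hΩ : IsOpen Ω)
    (hw : ContDiffOn ℝ (⊤ : ℕ∞) w Ω) : ContDiffOn ℝ (⊤ : ℕ∞) (conjForm w) Ω :=
  ((contDiffOn_pd2 hΩ hw).smul contDiffOn_const).sub
    ((contDiffOn_pd1 hΩ hw).smul contDiffOn_const)

/-- The form `conjForm w` is closed where `w` is harmonic. -/
theorem fderiv_conjForm_symm {Ω : Set (ℝ × ℝ)} {w : ℝ × ℝ → ℝ} (hΩ : IsOpen Ω)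
    (hw : ContDiffOn ℝ (⊤ : ℕ∞) w Ω) {a : ℝ × ℝ} (ha : a ∈ Ω) (hlap : lap w a = 0)
    (x y : ℝ × ℝ) : fderiv ℝ (conjForm w) a x y = fderiv ℝ (conjForm w) a y x := by
  have h1 := differentiableAt_of_contDiffOn hΩ (contDiffOn_pd1 hΩ hw) ha
  have h2 := differentiableAt_of_contDiffOn hΩ (contDiffOn_pd2 hΩ hw) ha
  have hder : HasFDerivAt (conjForm w) _ a :=
    (h2.hasFDerivAt.smul_const (ContinuousLinearMap.fst ℝ ℝ ℝ)).fun_sub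
      (h1.hasFDerivAt.smul_const (ContinuousLinearMap.snd ℝ ℝ ℝ))
  have hsplit : ∀ (L : ℝ × ℝ →L[ℝ] ℝ) (z : ℝ × ℝ), L z = z.1 * L (1, 0) + z.2 * L (0, 1) := by
    intro L z
    conv_lhs => rw [show z = z.1 • ((1, 0) : ℝ × ℝ) + z.2 • ((0, 1) : ℝ × ℝ) by ext <;> simp]
    simp only [map_add, map_smul, smul_eq_mul]
  have hlap' : fderiv ℝ (pd1 w) a (1, 0) + fderiv ℝ (pd2 w) a (0, 1) = 0 := hlap
  rw [hder.fderiv]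
  simp only [sub_apply, ContinuousLinearMap.smulRight_apply,
    smul_apply, ContinuousLinearMap.coe_fst', ContinuousLinearMap.coe_snd',
    smul_eq_mul]
  rw [hsplit (fderiv ℝ (pd2 w) a) x, hsplit (fderiv ℝ (pd2 w) a) y,
    hsplit (fderiv ℝ (pd1 w) a) x, hsplit (fderiv ℝ (pd1 w) a) y]
  linear_combination (x.2 * y.1 - x.1 * y.2) * hlap'

/-- A harmonic function on a simply connected open set has a harmonic conjugate. -/
theorem exists_harmonicConjugate {Ω : Set (ℝ × ℝ)} {w : ℝ × ℝ → ℝ} (hΩ : IsOpen Ω)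
    (hsc : SimplyConnectedSpace Ω) (hw : ContDiffOn ℝ (⊤ : ℕ∞) w Ω)
    (hlap : ∀ x ∈ Ω, lap w x = 0) :
    ∃ p : ℝ × ℝ → ℝ, ContDiffOn ℝ (⊤ : ℕ∞) p Ω ∧ EqOn (pd1 p) (pd2 w) Ω ∧
      EqOn (pd2 p) (fun x => -pd1 w x) Ω ∧ ∀ x ∈ Ω, lap p x = 0 := by
  have hform := contDiffOn_conjForm hΩ hw
  obtain ⟨p, hp⟩ := exists_primitive hΩ hsc (hform.differentiableOn (by simp))
    fun a ha => fderiv_conjForm_symm hΩ hw ha (hlap a ha)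
  have hp1 : EqOn (pd1 p) (pd2 w) Ω := fun x hx => by
    change fderiv ℝ p x (1, 0) = _
    rw [(hp x hx).fderiv]
    simp [conjForm]
  have hp2 : EqOn (pd2 p) (fun x => -pd1 w x) Ω := fun x hx => by
    change fderiv ℝ p x (0, 1) = _
    rw [(hp x hx).fderiv]
    simp [conjForm]
  refine ⟨p, ?_, hp1, hp2, fun x hx => ?_⟩
  · refine (contDiffOn_infty_iff_fderiv_of_isOpen hΩ).mpr
      ⟨fun x hx => (hp x hx).differentiableAt.differentiableWithinAt, ?_⟩
    exact hform.congr fun x hx => (hp x hx).fderiv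
  · simp only [lap]
    rw [pd1_congr hΩ hp1 hx, pd2_congr hΩ hp2 hx, pd2_neg, pd1_pd2_comm hΩ hw hx]
    ring

theorem stmt7 (Ω : Set (ℝ × ℝ)) (hΩ : IsOpen Ω) (hsc : SimplyConnectedSpace Ω) (lam : ℝ)
    (ψ : ℝ × ℝ → ℝ) (hψ : ContDiffOn ℝ (⊤ : ℕ∞) ψ Ω)
    (hbuck : ∀ x ∈ Ω, lap (lap ψ) x + lam * lap ψ x = 0)
    (u : ℝ × ℝ → ℝ × ℝ) (hu : u = fun x => (pd2 ψ x, - pd1 ψ x)) :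
    ∃ p : ℝ × ℝ → ℝ, ContDiffOn ℝ (⊤ : ℕ∞) p Ω ∧
      (∀ x ∈ Ω,
        lap (fun y => (u y).1) x + lam * (u x).1 = pd1 p x ∧
        lap (fun y => (u y).2) x + lam * (u x).2 = pd2 p x) ∧
      ∀ x ∈ Ω, lap p x = 0 := by
  subst hu
  have hlapψ := contDiffOn_lap hΩ hψ
  have hw : ContDiffOn ℝ (⊤ : ℕ∞) (fun x => lap ψ x + lam * ψ x) Ω :=
    hlapψ.add (contDiffOn_const.mul hψ)
  obtain ⟨p, hp, hp1, hp2, hp3⟩ := exists_harmonicConjugate hΩ hsc hw fun x hx => by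
    rw [lap_add_mul hΩ hlapψ hψ lam hx]
    exact hbuck x hx
  refine ⟨p, hp, fun x hx => ⟨?_, ?_⟩, hp3⟩
  · rw [hp1 hx, pd2_add_mul hΩ hlapψ hψ lam hx]
    dsimp only
    rw [← lap_pd2 hΩ hψ hx]
  · rw [hp2 hx]
    dsimp only
    rw [lap_neg, pd1_add_mul hΩ hlapψ hψ lam hx, lap_pd1 hΩ hψ hx]
    ring
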